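/- arXiv:1607.07684 — 5 statements merged into one kernel-verified Lean document; each statement's English description precedes it below -/
import Mathlib

section
/- In a first-price single-item auction, the deviation in which each bidder i bids b*_i = v_i/2 certifies (1/2,1)-smoothness: for every valuation profile v = (v_1,…,v_n) with v_i ≥ 0 and every bid profile b = (b_1,…,b_n) with b_i ≥ 0, one has Σ_{i=1}^n u_i(b*_i, b_{-i}; v_i) ≥ (1/2)·OPT(v) − p(b), where b*_i = v_i/2. -/
/-!
First-price single-item auction with `n + 1` bidders.  `win b` is the winner
under bid profile `b` (a fixed tie-breaking rule), required to be a highest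
bidder.  Bidder `i`'s utility under profile `b` is `(vᵢ - bᵢ) * xᵢ(b)` where
`xᵢ(b) = 1` iff `i` wins.  The selling price is `p b = max_i bᵢ` and the
optimal welfare is `OPT v = max_i vᵢ`.

STATEMENT 0: the deviations `b*ᵢ = vᵢ / 2` certify (1/2, 1)-smoothness:
`∑ i, uᵢ(b*ᵢ, b₋ᵢ; vᵢ) ≥ (1/2) · OPT v - p b`.
-/
theorem firstPrice_half_deviation_smooth (n : ℕ)
    (win : (Fin (n + 1) → ℝ) → Fin (n + 1))
    (hwin : ∀ (b : Fin (n + 1) → ℝ) (i : Fin (n + 1)), b i ≤ b (win b))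
    (v b : Fin (n + 1) → ℝ)
    (hv : ∀ i, 0 ≤ v i) (hb : ∀ i, 0 ≤ b i) :
    ∑ i, (v i - v i / 2) *
        (if win (Function.update b i (v i / 2)) = i then (1 : ℝ) else 0) ≥
      (1 / 2) * Finset.univ.sup' Finset.univ_nonempty v -
        Finset.univ.sup' Finset.univ_nonempty b := by
  -- Only the deviation of a bidder `k` with the highest valuation matters.
  obtain ⟨k, -, hk⟩ := Finset.exists_mem_eq_sup' Finset.univ_nonempty v
  rw [hk]
  have hle : ∀ j, b j ≤ Finset.univ.sup' Finset.univ_nonempty b :=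
    fun j => Finset.le_sup' b (Finset.mem_univ j)
  have hnonneg : ∀ i ∈ Finset.univ, 0 ≤ (v i - v i / 2) *
      (if win (Function.update b i (v i / 2)) = i then (1 : ℝ) else 0) := by
    intro i _
    have := hv i
    apply mul_nonneg
    · linarith
    · split_ifs <;> norm_num
  have hsingle := Finset.single_le_sum hnonneg (Finset.mem_univ k)
  by_cases h : win (Function.update b k (v k / 2)) = k
  · -- `k` wins and earns `v k / 2`, while the price is nonnegative.
    simp only [h, if_true] at hsingle
    have := (hb k).trans (hle k)
    linarith
  · -- `k` loses to some `j ≠ k`, so `v k / 2 ≤ b j ≤ p b` and the right-hand side is `≤ 0`.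
    have hw := hwin (Function.update b k (v k / 2)) k
    rw [Function.update_self, Function.update_of_ne h] at hw
    have := hle (win (Function.update b k (v k / 2)))
    have := Finset.sum_nonneg hnonneg
    linarith
end

section
/- The single-item all-pay auction is (1/2,1)-smooth: for every valuation profile v with v_1 = max_i v_i, the deviation in which player 1 bids b*_1 drawn uniformly from [0, v_1] and every other player bids b*_i = 0 satisfies, for every bid profile b, Σ_{i=1}^n E[u_i(b*_i, b_{-i}; v_i)] ≥ (1/2)·max_i v_i − Σ_{j=1}^n b_j. In particular, E_{b*_1 ∼ Uniform[0,v_1]}[u_1(b*_1, b_{-1}; v_1)] = v_1·Pr[b*_1 > max_{j>1} b_j] − v_1/2 ≥ v_1/2 − max_j b_j. -/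
open MeasureTheory

/-!
Let `M` be the highest bid of the players other than `0`.  A bid `t > M` wins for player `0` and a
bid `t < M` loses, whatever the tie-breaking rule, so under the atomless uniform law the allocation
is almost surely the indicator of `t > M`; since the mean of the bid is `v 0 / 2`, this gives the
formula for the expected utility.  The winning probability is at least `(v 0 - M) / v 0`, hence
player `0` gets at least `v 0 / 2 - M`, and `M ≤ max b ≤ ∑ b`.  The players who deviate to `0`
have nonnegative utility, so the smoothness inequality follows.  If `v 0 = 0` the "uniform law" is
the zero measure and all terms involving it vanish.
-/

/-- The uniform law on `[0, V]`; it is the zero measure when `V ≤ 0`. -/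
noncomputable def uniformLaw (V : ℝ) : Measure ℝ :=
  ENNReal.ofReal V⁻¹ • volume.restrict (Set.Icc (0 : ℝ) V)

instance uniformLaw_isFinite (V : ℝ) : IsFiniteMeasure (uniformLaw V) := by
  unfold uniformLaw
  exact Measure.smul_finite _ ENNReal.ofReal_ne_top

lemma uniformLaw_zero : uniformLaw 0 = 0 := by
  simp [uniformLaw]

lemma uniformLaw_singleton (V a : ℝ) : uniformLaw V {a} = 0 := by
  have h : (volume.restrict (Set.Icc (0 : ℝ) V)) {a} = 0 := by simp
  rw [uniformLaw, Measure.smul_apply, h, smul_zero]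

lemma integrable_id_uniformLaw (V : ℝ) : Integrable (fun t : ℝ => t) (uniformLaw V) := by
  unfold uniformLaw
  have h : IntegrableOn (fun t : ℝ => t) (Set.Icc 0 V) volume :=
    continuous_id.continuousOn.integrableOn_compact isCompact_Icc
  exact Integrable.smul_measure h ENNReal.ofReal_ne_top

lemma integral_id_uniformLaw {V : ℝ} (hV : 0 ≤ V) : ∫ t, t ∂(uniformLaw V) = V / 2 := by
  rcases hV.eq_or_lt with rfl | hV
  · simp [uniformLaw_zero]
  · rw [uniformLaw, integral_smul_measure, integral_Icc_eq_integral_Ioc,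
      ← intervalIntegral.integral_of_le hV.le, integral_id,
      ENNReal.toReal_ofReal (inv_nonneg.mpr hV.le), smul_eq_mul]
    field_simp
    ring

/-- A bid uniform on `[0, V]` exceeds a threshold `M ≥ 0` with probability at least `1 - M / V`. -/
lemma sub_le_mul_uniformLaw_Ioi {V M : ℝ} (hV : 0 ≤ V) (hM : 0 ≤ M) :
    V - M ≤ V * (uniformLaw V (Set.Ioi M)).toReal := by
  rcases hV.eq_or_lt with rfl | hV
  · simpa using hM
  · have hset : Set.Ioi M ∩ Set.Icc 0 V = Set.Ioc M V := by
      ext t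
      simp only [Set.mem_inter_iff, Set.mem_Ioi, Set.mem_Icc, Set.mem_Ioc]
      constructor
      · rintro ⟨h1, h2, h3⟩
        exact ⟨h1, h3⟩
      · rintro ⟨h1, h2⟩
        exact ⟨h1, by linarith, h2⟩
    rw [uniformLaw, Measure.smul_apply, Measure.restrict_apply measurableSet_Ioi, hset,
      Real.volume_Ioc, smul_eq_mul, ENNReal.toReal_mul,
      ENNReal.toReal_ofReal (inv_nonneg.mpr hV.le), ← mul_assoc, mul_inv_cancel₀ hV.ne', one_mul]
    exact ENNReal.toReal_ofReal' ▸ le_max_left _ _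

/-- If a bid above `M` wins and a bid below `M` loses, the outcome of the tie `t = M` does not
affect the expected utility. -/
lemma integral_utility {V M : ℝ} (hV : 0 ≤ V) (P : ℝ → Prop) [DecidablePred P]
    (hhi : ∀ t, M < t → P t) (hlo : ∀ t, t < M → ¬ P t) :
    ∫ t, (V * (if P t then (1 : ℝ) else 0) - t) ∂(uniformLaw V) =
      V * (uniformLaw V (Set.Ioi M)).toReal - V / 2 := by
  have hae : (fun t => V * (if P t then (1 : ℝ) else 0) - t) =ᵐ[uniformLaw V]
      fun t => V * (Set.Ioi M).indicator (fun _ => (1 : ℝ)) t - t := by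
    have hne : ∀ᵐ t ∂(uniformLaw V), t ≠ M := by
      rw [ae_iff]
      simpa using uniformLaw_singleton V M
    filter_upwards [hne] with t ht
    rcases lt_or_gt_of_ne ht with h | h
    · simp [hlo t h, h.le]
    · simp [hhi t h, h]
  have hint : Integrable ((Set.Ioi M).indicator (fun _ => (1 : ℝ))) (uniformLaw V) :=
    (integrable_const 1).indicator measurableSet_Ioi
  rw [integral_congr_ae hae, integral_sub (hint.const_mul V) (integrable_id_uniformLaw V),
    integral_id_uniformLaw hV, integral_const_mul, integral_indicator measurableSet_Ioi]
  simp [Measure.real]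

/-!
Single-item all-pay auction with `n + 2` players (indexed by `Fin (n+2)`;
player `0` plays the role of "player 1" in the text).  `win b` is the
(highest-bidding) winner; player `i`'s utility is `vᵢ·xᵢ(b) - bᵢ`.

STATEMENT 10: the all-pay auction is (1/2, 1)-smooth.  For a valuation profile
`v` with `v 0 = max_i v i`, let player `0` deviate to a bid drawn uniformly
from `[0, v 0]` (the measure `D` below) and every other player deviate to `0`.
Then for every bid profile `b`:
* `∑ i, E[uᵢ(b*ᵢ, b₋ᵢ; vᵢ)] ≥ (1/2)·max_i vᵢ - ∑ j, bⱼ`;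
* in particular `E[u₀(b*₀, b₋₀; v₀)] = v₀·Pr[b*₀ > max_{j≠0} bⱼ] - v₀/2
  ≥ v₀/2 - max_j bⱼ`.
-/
theorem allPay_half_smooth (n : ℕ)
    (win : (Fin (n + 2) → ℝ) → Fin (n + 2))
    (hwin : ∀ (b : Fin (n + 2) → ℝ) (i : Fin (n + 2)), b i ≤ b (win b))
    (v : Fin (n + 2) → ℝ)
    (hv : ∀ i, 0 ≤ v i) (hvmax : ∀ i, v i ≤ v 0)
    (b : Fin (n + 2) → ℝ) (hb : ∀ i, 0 ≤ b i) :
    (∫ t, (v 0 * (if win (Function.update b 0 t) = 0 then (1 : ℝ) else 0) - t)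
          ∂(ENNReal.ofReal (v 0)⁻¹ • volume.restrict (Set.Icc (0 : ℝ) (v 0))) +
        ∑ i ∈ Finset.univ.erase (0 : Fin (n + 2)),
          (v i * (if win (Function.update b i 0) = i then (1 : ℝ) else 0) - 0) ≥
      (1 / 2) * Finset.univ.sup' Finset.univ_nonempty v - ∑ j, b j) ∧
    (∫ t, (v 0 * (if win (Function.update b 0 t) = 0 then (1 : ℝ) else 0) - t)
          ∂(ENNReal.ofReal (v 0)⁻¹ • volume.restrict (Set.Icc (0 : ℝ) (v 0))) =
      v 0 * ((ENNReal.ofReal (v 0)⁻¹ •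
            volume.restrict (Set.Icc (0 : ℝ) (v 0)))
          {t : ℝ | (Finset.univ.erase (0 : Fin (n + 2))).sup'
              ⟨1, Finset.mem_erase.mpr ⟨one_ne_zero, Finset.mem_univ 1⟩⟩ b < t}).toReal -
        v 0 / 2) ∧
    (v 0 * ((ENNReal.ofReal (v 0)⁻¹ •
            volume.restrict (Set.Icc (0 : ℝ) (v 0)))
          {t : ℝ | (Finset.univ.erase (0 : Fin (n + 2))).sup'
              ⟨1, Finset.mem_erase.mpr ⟨one_ne_zero, Finset.mem_univ 1⟩⟩ b < t}).toReal -
        v 0 / 2 ≥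
      v 0 / 2 - Finset.univ.sup' Finset.univ_nonempty b) := by
  set M : ℝ := (Finset.univ.erase (0 : Fin (n + 2))).sup'
    ⟨1, Finset.mem_erase.mpr ⟨one_ne_zero, Finset.mem_univ 1⟩⟩ b with hMdef
  have hle : ∀ i, i ≠ 0 → b i ≤ M := fun i hi =>
    Finset.le_sup' b (Finset.mem_erase.mpr ⟨hi, Finset.mem_univ i⟩)
  have hM0 : 0 ≤ M := (hb 1).trans (hle 1 one_ne_zero)
  obtain ⟨k, hk, hMk⟩ := Finset.exists_mem_eq_sup' (s := Finset.univ.erase (0 : Fin (n + 2)))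
    ⟨1, Finset.mem_erase.mpr ⟨one_ne_zero, Finset.mem_univ 1⟩⟩ b
  rw [← hMdef] at hMk
  have hk0 : k ≠ 0 := (Finset.mem_erase.mp hk).1
  have hhi : ∀ t, M < t → win (Function.update b 0 t) = 0 := by
    intro t ht
    by_contra hne
    have h := hwin (Function.update b 0 t) 0
    rw [Function.update_self, Function.update_of_ne hne] at h
    linarith [hle _ hne]
  have hlo : ∀ t, t < M → ¬ win (Function.update b 0 t) = 0 := by
    intro t ht heq
    have h := hwin (Function.update b 0 t) k
    rw [heq, Function.update_self, Function.update_of_ne hk0] at h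
    linarith
  have hutil := integral_utility (hv 0) (fun t => win (Function.update b 0 t) = 0) hhi hlo
  have hprob := sub_le_mul_uniformLaw_Ioi (hv 0) hM0
  have hMsup : M ≤ Finset.univ.sup' Finset.univ_nonempty b :=
    hMk ▸ Finset.le_sup' b (Finset.mem_univ k)
  have hMsum : M ≤ ∑ j, b j :=
    hMk ▸ Finset.single_le_sum (fun i _ => hb i) (Finset.mem_univ k)
  have hvsup : Finset.univ.sup' Finset.univ_nonempty v ≤ v 0 :=
    Finset.sup'_le _ _ fun i _ => hvmax i
  have hrest : 0 ≤ ∑ i ∈ Finset.univ.erase (0 : Fin (n + 2)),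
      (v i * (if win (Function.update b i 0) = i then (1 : ℝ) else 0) - 0) := by
    refine Finset.sum_nonneg fun i _ => ?_
    rw [sub_zero]
    exact mul_nonneg (hv i) (by split_ifs <;> norm_num)
  change (∫ t, (v 0 * (if win (Function.update b 0 t) = 0 then (1 : ℝ) else 0) - t)
      ∂(uniformLaw (v 0)) + _ ≥ _) ∧
    (∫ t, (v 0 * (if win (Function.update b 0 t) = 0 then (1 : ℝ) else 0) - t)
      ∂(uniformLaw (v 0)) = v 0 * (uniformLaw (v 0) (Set.Ioi M)).toReal - v 0 / 2) ∧
    (v 0 * (uniformLaw (v 0) (Set.Ioi M)).toReal - v 0 / 2 ≥ _)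
  refine ⟨?_, hutil, ?_⟩ <;> linarith
end

section
/- (Extension to Vanishing Regret Sequences) If an auction is (λ,μ)-smooth and REV(a) ≤ SW(a; v) for every action profile a, then for every valuation profile v ∈ V and every vanishing regret sequence a^1, a^2, … of action profiles (i.e., for every player i and every action a'_i ∈ A_i, limsup_{T→∞} (1/T)·Σ_{t=1}^T (u_i(a'_i, a^t_{-i}; v_i) − u_i(a^t; v_i)) ≤ 0), the average welfare satisfies liminf_{T→∞} (1/T)·Σ_{t=1}^T SW(a^t; v) ≥ (λ/μ)·OPT(v). -/
open MeasureTheory Filter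

/-!
Fix `v` and the deviation distributions `D i` that smoothness provides. For player `i` write
`R i T x` for the average regret up to time `T` towards the action `x`. Vanishing regret says that
the positive part of `R i T x` tends to `0` for each fixed `x`; since utilities are bounded,
dominated convergence gives `∫ x, max (R i T x) 0 ∂(D i) → 0`
(`tendsto_integral_posPart_of_limsup_nonpos`). Averaging the smoothness inequality over
`t < T` bounds `lam * OPT v - mu * avg REV` by the average total utility plus these vanishing error
terms. The average total utility is nonnegative and `1 ≤ mu`, so it is at most `mu` times itself;
hence `mu` times the average welfare is at least `lam * OPT v` minus the errors, and dividing by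
`mu` and letting `T → ∞` gives the claim.
-/

/-- This includes `T = 0`, where the average is `0` by the convention `1 / 0 = 0`. -/
lemma abs_average_le {f : ℕ → ℝ} {K : ℝ} (hK : 0 ≤ K) (hf : ∀ t, |f t| ≤ K) (T : ℕ) :
    |(1 / (T : ℝ)) * ∑ t ∈ Finset.range T, f t| ≤ K := by
  rcases Nat.eq_zero_or_pos T with rfl | hT
  · simpa using hK
  have hT' : (0 : ℝ) < T := by exact_mod_cast hT
  have h : |∑ t ∈ Finset.range T, f t| ≤ T * K := by
    refine (Finset.abs_sum_le_sum_abs _ _).trans ((Finset.sum_le_sum fun t _ => hf t).trans ?_)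
    simp
  rw [abs_mul, abs_of_pos (by positivity), one_div, inv_mul_le_iff₀ hT']
  exact h

lemma tendsto_posPart_of_limsup_nonpos {R : ℕ → ℝ} {K : ℝ} (hR : ∀ T, |R T| ≤ K)
    (h : limsup R atTop ≤ 0) : Tendsto (fun T => max (R T) 0) atTop (nhds 0) := by
  have hbdd : IsBoundedUnder (· ≤ ·) atTop R :=
    isBoundedUnder_of ⟨K, fun T => (abs_le.1 (hR T)).2⟩
  rw [tendsto_order]
  refine ⟨fun b hb => Eventually.of_forall fun T => lt_of_lt_of_le hb (le_max_right _ _),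
    fun b hb => ?_⟩
  filter_upwards [eventually_lt_of_limsup_lt (lt_of_le_of_lt h hb) hbdd] with T hT
  exact max_lt hT hb

/-- Pointwise vanishing regret passes to the expected regret against a random deviation: the
positive parts converge to `0` and are uniformly bounded, so dominated convergence applies. -/
lemma tendsto_integral_posPart_of_limsup_nonpos {X : Type*} [MeasurableSpace X] (P : Measure X)
    [IsProbabilityMeasure P] {R : ℕ → X → ℝ} {K : ℝ} (hm : ∀ T, Measurable (R T))
    (hR : ∀ T x, |R T x| ≤ K) (h : ∀ x, limsup (fun T => R T x) atTop ≤ 0) :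
    Tendsto (fun T => ∫ x, max (R T x) 0 ∂P) atTop (nhds 0) := by
  have key := tendsto_integral_of_dominated_convergence (μ := P)
    (F := fun T x => max (R T x) 0) (f := fun _ => 0) (fun _ => K)
    (fun T => ((hm T).max measurable_const).aestronglyMeasurable) (integrable_const K)
    (fun T => ae_of_all _ fun x => ?_)
    (ae_of_all _ fun x => tendsto_posPart_of_limsup_nonpos (fun T => hR T x) (h x))
  · simpa using key
  · rw [Real.norm_eq_abs, abs_of_nonneg (le_max_right _ _)]
    exact max_le ((le_abs_self _).trans (hR T x)) ((abs_nonneg _).trans (hR T x))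

/-!
General auction (players `Fin n`, actions `A i`, types `V i`, utilities `u`,
revenue `REV ≥ 0`, benchmark `OPT`, welfare `SW(a; v) = ∑ i, u i a (v i) + REV a`,
assumed ≥ `REV a`), which is `(λ, μ)`-smooth (`hsmooth`).  Utilities and
revenue are assumed bounded (by `C`) so that all averages exist.

STATEMENT 12 (Extension to Vanishing Regret Sequences): for every valuation
profile `v` and every vanishing-regret sequence `a⁰, a¹, …` of action profiles
(for each player `i` and action `a'ᵢ`,
`limsup_T (1/T)·∑_{t<T} (u i (a'ᵢ, aᵗ₋ᵢ) - u i aᵗ) ≤ 0`), the average welfare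
satisfies `liminf_T (1/T)·∑_{t<T} SW(aᵗ; v) ≥ (λ/μ)·OPT v`.
-/
theorem smooth_auction_vanishing_regret_welfare (n : ℕ)
    (A : Fin n → Type*) [∀ i, MeasurableSpace (A i)]
    (V : Fin n → Type*)
    (u : ∀ i : Fin n, (∀ j, A j) → V i → ℝ)
    (REV : (∀ j, A j) → ℝ)
    (OPT : (∀ i, V i) → ℝ)
    (lam mu : ℝ) (hlam : 0 ≤ lam) (hmu : 1 ≤ mu)
    (hREV : ∀ a, 0 ≤ REV a)
    (hREVSW : ∀ (a : ∀ j, A j) (w : ∀ i, V i),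
      REV a ≤ (∑ i, u i a (w i)) + REV a)
    (hsmooth : ∀ w : ∀ i, V i, ∃ D : ∀ i, Measure (A i),
      (∀ i, IsProbabilityMeasure (D i)) ∧
      ∀ a : ∀ j, A j,
        ∑ i, ∫ ai, u i (Function.update a i ai) (w i) ∂(D i) ≥
          lam * OPT w - mu * REV a)
    (v : ∀ i, V i)
    (C : ℝ)
    (huBound : ∀ (i : Fin n) (a : ∀ j, A j), |u i a (v i)| ≤ C)
    (hREVBound : ∀ a : ∀ j, A j, REV a ≤ C)
    (huMeas : ∀ (i : Fin n) (a : ∀ j, A j),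
      Measurable fun ai : A i => u i (Function.update a i ai) (v i))
    (a : ℕ → ∀ j, A j)
    (hregret : ∀ (i : Fin n) (a' : A i),
      limsup (fun T : ℕ => (1 / (T : ℝ)) *
        ∑ t ∈ Finset.range T,
          (u i (Function.update (a t) i a') (v i) - u i (a t) (v i))) atTop ≤ 0) :
    liminf (fun T : ℕ => (1 / (T : ℝ)) *
        ∑ t ∈ Finset.range T, ((∑ i, u i (a t) (v i)) + REV (a t))) atTop ≥
      (lam / mu) * OPT v := by
  obtain ⟨D, hD, hs⟩ := hsmooth v
  have hC : 0 ≤ C := (hREV (a 0)).trans (hREVBound (a 0))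
  have hmu0 : 0 < mu := by linarith
  let R : ∀ i : Fin n, ℕ → A i → ℝ := fun i T x => (1 / (T : ℝ)) *
    ∑ t ∈ Finset.range T, (u i (Function.update (a t) i x) (v i) - u i (a t) (v i))
  have hRm : ∀ i T, Measurable (R i T) := fun i T =>
    (Finset.measurable_fun_sum _ fun t _ => (huMeas i (a t)).sub_const _).const_mul _
  have hRb : ∀ i T x, |R i T x| ≤ C + C := fun i T x =>
    abs_average_le (by linarith)
      (fun t => (abs_sub _ _).trans (add_le_add (huBound i _) (huBound i _))) T
  have hint : ∀ i b, Integrable (fun x => u i (Function.update b i x) (v i)) (D i) := by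
    intro i b
    have := hD i
    exact Integrable.of_bound (huMeas i b).aestronglyMeasurable C
      (ae_of_all _ fun x => huBound i _)
  have hRint : ∀ i T, Integrable (R i T) (D i) := by
    intro i T
    have := hD i
    exact Integrable.of_bound (hRm i T).aestronglyMeasurable (C + C)
      (ae_of_all _ fun x => hRb i T x)
  let err : ℕ → ℝ := fun T => ∑ i, ∫ x, max (R i T x) 0 ∂(D i)
  have herr : Tendsto err atTop (nhds 0) := by
    have := tendsto_finsetSum (Finset.univ : Finset (Fin n)) fun i _ =>
      have := hD i
      tendsto_integral_posPart_of_limsup_nonpos (D i) (hRm i) (hRb i) (hregret i)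
    simpa using this
  have hRval : ∀ i T, ∫ x, R i T x ∂(D i) = (1 / (T : ℝ)) * ∑ t ∈ Finset.range T,
      ((∫ x, u i (Function.update (a t) i x) (v i) ∂(D i)) - u i (a t) (v i)) := by
    intro i T
    have := hD i
    simp only [R]
    rw [integral_const_mul, integral_finsetSum _ fun t _ => by
      exact (hint i (a t)).sub (integrable_const (u i (a t) (v i)))]
    congr 1
    refine Finset.sum_congr rfl fun t _ => ?_
    rw [integral_sub (hint i (a t)) (integrable_const _)]
    simp
  have hRerr : ∀ T, ∑ i, ∫ x, R i T x ∂(D i) ≤ err T := fun T =>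
    Finset.sum_le_sum fun i _ => by
      have := hD i
      exact integral_mono (hRint i T) ((hRint i T).sup (integrable_const 0))
        fun x => le_max_left _ _
  set S : ℕ → ℝ := fun T => (1 / (T : ℝ)) *
    ∑ t ∈ Finset.range T, ((∑ i, u i (a t) (v i)) + REV (a t)) with hS
  have hlower : ∀ T : ℕ, 1 ≤ T → (lam * OPT v - err T) / mu ≤ S T := by
    intro T hT
    have hT' : (0 : ℝ) < T := by exact_mod_cast hT
    rw [div_le_iff₀ hmu0]
    -- Smoothness bounds the total expected regret at time `t` below by
    -- `lam * OPT - mu * REV - (total utility)`; as the total utility is nonnegative and `1 ≤ mu`,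
    -- this is at least `lam * OPT - mu * SW`.
    have hstep : ∀ t, lam * OPT v - mu * ((∑ i, u i (a t) (v i)) + REV (a t)) ≤
        ∑ i, ((∫ x, u i (Function.update (a t) i x) (v i) ∂(D i)) - u i (a t) (v i)) := by
      intro t
      have h1 := hs (a t)
      have h2 := hREVSW (a t) v
      rw [Finset.sum_sub_distrib]
      nlinarith
    have hsum := Finset.sum_le_sum fun t (_ : t ∈ Finset.range T) => hstep t
    have havg := mul_le_mul_of_nonneg_left hsum (one_div_nonneg.2 hT'.le)
    have hE := hRerr T
    simp only [hRval] at hE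
    rw [← Finset.mul_sum, Finset.sum_comm] at hE
    have hL : (1 / (T : ℝ)) * ∑ t ∈ Finset.range T,
        (lam * OPT v - mu * ((∑ i, u i (a t) (v i)) + REV (a t))) = lam * OPT v - mu * S T := by
      rw [Finset.sum_sub_distrib, Finset.sum_const, Finset.card_range, nsmul_eq_mul,
        ← Finset.mul_sum]
      simp only [hS]
      field_simp
    linarith
  have hSb : ∀ T, S T ≤ n * C + C := fun T =>
    (le_abs_self _).trans <| abs_average_le (by positivity) (fun t => by
      refine (abs_add_le _ _).trans (add_le_add ?_ ?_)
      · refine (Finset.abs_sum_le_sum_abs _ _).trans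
          ((Finset.sum_le_sum fun i _ => huBound i (a t)).trans ?_)
        simp
      · rw [abs_of_nonneg (hREV _)]
        exact hREVBound _) T
  have hg : Tendsto (fun T => (lam * OPT v - err T) / mu) atTop (nhds (lam / mu * OPT v)) := by
    have := (herr.const_sub (lam * OPT v)).div_const mu
    rwa [sub_zero, mul_div_right_comm] at this
  rw [ge_iff_le, ← hg.liminf_eq]
  exact liminf_le_liminf (eventually_atTop.2 ⟨1, hlower⟩) hg.isBoundedUnder_ge
    (isBoundedUnder_of ⟨_, hSb⟩ : IsBoundedUnder (· ≤ ·) atTop S).isCoboundedUnder_ge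
end

section
/- In the asymmetric first-price auction equilibrium of Vickrey for two bidders with values uniform on [0,1] and [0,2], the weaker bidder bids strictly more aggressively than the stronger bidder: for every v ∈ (0,1], s₁(v) > s₂(v), where s₁(v) = (4/(3v))·(1 − √(1 − 3v²/4)) and s₂(v) = (4/(3v))·(√(1 + 3v²/4) − 1). Equivalently, √(1 − 3v²/4) + √(1 + 3v²/4) < 2 for every v ∈ (0,1]. -/
/-!
Vickrey's asymmetric first-price auction equilibrium for two bidders with values
uniform on `[0,1]` and `[0,2]`:
`s₁(v) = (4/(3v))·(1 - √(1 - 3v²/4))` and `s₂(v) = (4/(3v))·(√(1 + 3v²/4) - 1)`.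
The weaker bidder bids strictly more aggressively: `s₁(v) > s₂(v)` for all
`v ∈ (0,1]`; equivalently `√(1 - 3v²/4) + √(1 + 3v²/4) < 2`.
-/
theorem vickrey_weak_bidder_more_aggressive :
    ∀ v : ℝ, 0 < v → v ≤ 1 →
      (4 / (3 * v)) * (1 - Real.sqrt (1 - 3 * v ^ 2 / 4)) >
        (4 / (3 * v)) * (Real.sqrt (1 + 3 * v ^ 2 / 4) - 1) ∧
      Real.sqrt (1 - 3 * v ^ 2 / 4) + Real.sqrt (1 + 3 * v ^ 2 / 4) < 2 := by
  intro v hv hv1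
  have hsq : 0 < v ^ 2 := by positivity
  have hsq1 : v ^ 2 ≤ 1 := by nlinarith
  -- Each root lies strictly below the tangent line of `√` at `1`; the two tangent values sum to `2`.
  have hsub : Real.sqrt (1 - 3 * v ^ 2 / 4) < 1 - 3 * v ^ 2 / 8 := by
    rw [Real.sqrt_lt' (by linarith)]
    nlinarith [mul_pos hsq hsq]
  have hadd : Real.sqrt (1 + 3 * v ^ 2 / 4) < 1 + 3 * v ^ 2 / 8 := by
    rw [Real.sqrt_lt' (by linarith)]
    nlinarith [mul_pos hsq hsq]
  exact ⟨mul_lt_mul_of_pos_left (by linarith) (by positivity), by linarith⟩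
end

section
/- Consider two bidders and two items, where each bidder values any single item at 1 (and any nonempty set of items at 1) and is restricted to bid on exactly one item. The mixed strategy in which each bidder independently picks an item uniformly at random and bids an amount x drawn from the distribution with CDF F(x) = x/(1−x) supported on [0, 1/2] is a mixed Nash equilibrium of the simultaneous first-price auction: the expected utility of bidding any b ∈ [0, 1/2] on either item equals 1/2 (indeed (1 − b)·(1/2 + (1/2)·b/(1−b)) = 1/2 for b ∈ [0, 1/2]), and the expected utility of any bid b > 1/2 is strictly less than 1/2. Moreover, at this equilibrium each item is allocated with probability 3/4, so the expected social welfare is 3/2, while the optimal welfare is 2. -/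
/-!
Against an opponent playing `mixedStrat`, a bid `c` on item `i` loses exactly on the rectangle
`{i} ×ˢ Ici c`, so `expUtil c i = (1 - c) * (1 - bidDist (Ici c) / 2)` (`expUtil_eq`).
On `[0, 1]` the inequality `c ≤ u / (1 + u)` says `c / (1 - c) ≤ u`, hence `bidDist (Ici c)` is
`1 - c / (1 - c)` for `0 ≤ c ≤ 1/2` and `0` for `c > 1/2`. The first value makes the utility
constantly `1/2` on the support of the bids, the second makes it `1 - c < 1/2` above it; integrating
over the support gives the equilibrium utility. The allocation and welfare claims only involve
the item choices, which are two independent fair coins: an item is left over exactly when both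
bidders choose the other one, and the two choices agree on a disjoint union of two rectangles
of measure `1/4` each.
-/

open MeasureTheory

/-- The bid distribution with CDF `F(x) = x/(1-x)` on `[0, 1/2]`, realized by
inverse-CDF sampling: push a uniform-`[0,1]` variable `u` through
`u ↦ u/(1+u)`. -/
noncomputable def bidDist : Measure ℝ :=
  (volume.restrict (Set.Icc (0 : ℝ) 1)).map fun u => u / (1 + u)

/-- The proposed mixed strategy: pick one of the two items (`Bool`) uniformly
at random and bid an amount drawn from `bidDist` on it. -/
noncomputable def mixedStrat : Measure (Bool × ℝ) :=
  ((PMF.uniformOfFintype Bool).toMeasure).prod bidDist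

/-- Expected utility of bidding `c` on item `i` against an opponent playing
`mixedStrat`, when every item is worth `1`: the bidder wins item `i` (and
pays `c`) unless the opponent picked the same item and bid at least `c`
(ties go to the opponent — they occur with probability zero anyway). -/
noncomputable def expUtil (c : ℝ) (i : Bool) : ℝ :=
  ∫ p, (if p.1 = i ∧ c ≤ p.2 then (0 : ℝ) else 1 - c) ∂mixedStrat

lemma measurable_bidMap : Measurable fun u : ℝ => u / (1 + u) := by fun_prop

instance isProbabilityMeasure_bidDist : IsProbabilityMeasure bidDist := by
  have : IsProbabilityMeasure (volume.restrict (Set.Icc (0 : ℝ) 1)) := ⟨by simp⟩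
  exact Measure.isProbabilityMeasure_map measurable_bidMap.aemeasurable

instance isProbabilityMeasure_mixedStrat : IsProbabilityMeasure mixedStrat := by
  unfold mixedStrat; infer_instance

lemma bidDist_Ici (c : ℝ) :
    bidDist (Set.Ici c) = volume ({u : ℝ | c ≤ u / (1 + u)} ∩ Set.Icc 0 1) := by
  rw [bidDist, Measure.map_apply measurable_bidMap measurableSet_Ici,
    Measure.restrict_apply (measurable_bidMap measurableSet_Ici)]
  rfl

/-- The survival function `1 - F` on the support, with `F(c) = c / (1 - c)`. -/
lemma bidDist_real_Ici_of_le {c : ℝ} (h0 : 0 ≤ c) (h1 : c ≤ 1 / 2) :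
    bidDist.real (Set.Ici c) = 1 - c / (1 - c) := by
  have hc : 0 < 1 - c := by linarith
  have hle : c / (1 - c) ≤ 1 := by rw [div_le_one hc]; linarith
  have hnn : 0 ≤ c / (1 - c) := div_nonneg h0 hc.le
  have hset : {u : ℝ | c ≤ u / (1 + u)} ∩ Set.Icc 0 1 = Set.Icc (c / (1 - c)) 1 := by
    ext u
    simp only [Set.mem_inter_iff, Set.mem_ofPred_eq, Set.mem_Icc]
    constructor
    · rintro ⟨h, hu0, hu1⟩
      rw [le_div_iff₀ (by linarith)] at h
      exact ⟨by rw [div_le_iff₀ hc]; linarith, hu1⟩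
    · rintro ⟨h, hu1⟩
      have hu0 := hnn.trans h
      rw [div_le_iff₀ hc] at h
      exact ⟨by rw [le_div_iff₀ (by linarith)]; linarith, hu0, hu1⟩
  rw [measureReal_def, bidDist_Ici, hset, Real.volume_Icc, ENNReal.toReal_ofReal (by linarith)]

lemma bidDist_real_Ici_of_gt {c : ℝ} (h : 1 / 2 < c) : bidDist.real (Set.Ici c) = 0 := by
  have hset : {u : ℝ | c ≤ u / (1 + u)} ∩ Set.Icc 0 1 = ∅ := by
    ext u
    simp only [Set.mem_inter_iff, Set.mem_ofPred_eq, Set.mem_Icc, Set.mem_empty_iff_false,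
      iff_false]
    rintro ⟨hu, hu0, hu1⟩
    rw [le_div_iff₀ (by linarith)] at hu
    nlinarith
  rw [measureReal_def, bidDist_Ici, hset]
  simp

lemma mixedStrat_real_prod (i : Bool) (s : Set ℝ) :
    mixedStrat.real ({i} ×ˢ s) = 1 / 2 * bidDist.real s := by
  rw [mixedStrat, measureReal_prod_prod, measureReal_def,
    PMF.toMeasure_apply_singleton _ _ (measurableSet_singleton i)]
  simp

lemma expUtil_eq (c : ℝ) (i : Bool) :
    expUtil c i = (1 - c) * (1 - 1 / 2 * bidDist.real (Set.Ici c)) := by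
  have hm : MeasurableSet (({i} : Set Bool) ×ˢ Set.Ici c) :=
    (measurableSet_singleton i).prod measurableSet_Ici
  have hf : (fun p : Bool × ℝ => if p.1 = i ∧ c ≤ p.2 then (0 : ℝ) else 1 - c)
      = (({i} : Set Bool) ×ˢ Set.Ici c)ᶜ.indicator fun _ => 1 - c := by
    ext p
    by_cases hp : p.1 = i ∧ c ≤ p.2 <;> simp [Set.indicator, hp]
  rw [expUtil, hf, integral_indicator_const _ hm.compl, probReal_compl_eq_one_sub hm,
    mixedStrat_real_prod, smul_eq_mul, mul_comm]

lemma utility_identity {c : ℝ} (h1 : c ≤ 1 / 2) :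
    (1 - c) * (1 / 2 + (1 / 2) * (c / (1 - c))) = 1 / 2 := by
  have hc : 1 - c ≠ 0 := by linarith
  field_simp
  ring

lemma expUtil_of_le {c : ℝ} (h0 : 0 ≤ c) (h1 : c ≤ 1 / 2) (i : Bool) :
    expUtil c i = 1 / 2 := by
  rw [expUtil_eq, bidDist_real_Ici_of_le h0 h1]
  linear_combination utility_identity h1

lemma ae_bidDist_mem_support : ∀ᵐ x ∂bidDist, x ∈ Set.Icc (0 : ℝ) (1 / 2) := by
  refine (ae_map_iff measurable_bidMap.aemeasurable measurableSet_Icc).2 ?_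
  filter_upwards [ae_restrict_mem measurableSet_Icc] with u hu
  obtain ⟨hu0, hu1⟩ := hu
  exact ⟨by positivity, by rw [div_le_iff₀ (by linarith)]; linarith⟩

lemma ae_mixedStrat_mem_support : ∀ᵐ p ∂mixedStrat, p.2 ∈ Set.Icc (0 : ℝ) (1 / 2) := by
  unfold mixedStrat
  exact Measure.quasiMeasurePreserving_snd.ae ae_bidDist_mem_support

/-- The event that the bidders choose items `i` and `j` respectively has probability `1/4`. -/
lemma prod_real_choices (i j : Bool) :
    (mixedStrat.prod mixedStrat).real
      ((({i} : Set Bool) ×ˢ Set.univ) ×ˢ (({j} : Set Bool) ×ˢ Set.univ)) = 1 / 4 := by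
  rw [measureReal_prod_prod, mixedStrat_real_prod, mixedStrat_real_prod, probReal_univ]
  norm_num

lemma measurableSet_choices (i j : Bool) :
    MeasurableSet ((({i} : Set Bool) ×ˢ (Set.univ : Set ℝ)) ×ˢ
      (({j} : Set Bool) ×ˢ (Set.univ : Set ℝ))) :=
  ((measurableSet_singleton i).prod .univ).prod ((measurableSet_singleton j).prod .univ)

lemma prod_item_allocated (i : Bool) :
    (mixedStrat.prod mixedStrat) {q : (Bool × ℝ) × Bool × ℝ | q.1.1 = i ∨ q.2.1 = i}
      = ENNReal.ofReal (3 / 4) := by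
  have hset : {q : (Bool × ℝ) × Bool × ℝ | q.1.1 = i ∨ q.2.1 = i}
      = ((({!i} : Set Bool) ×ˢ Set.univ) ×ˢ (({!i} : Set Bool) ×ˢ Set.univ))ᶜ := by
    ext ⟨⟨a, x⟩, b, y⟩
    cases a <;> cases b <;> cases i <;> simp
  rw [hset, ← ofReal_measureReal, probReal_compl_eq_one_sub (measurableSet_choices _ _),
    prod_real_choices]
  norm_num

lemma integral_welfare :
    (∫ q, (if q.1.1 = q.2.1 then (1 : ℝ) else 2) ∂(mixedStrat.prod mixedStrat)) = 3 / 2 := by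
  set R : Bool → Set ((Bool × ℝ) × Bool × ℝ) := fun i =>
    (({i} : Set Bool) ×ˢ Set.univ) ×ˢ (({i} : Set Bool) ×ˢ Set.univ) with hR
  have hm : ∀ i, MeasurableSet (R i) := fun i => measurableSet_choices i i
  -- The welfare is `2`, less `1` on each of the two events where the choices coincide.
  have hf : (fun q : (Bool × ℝ) × Bool × ℝ => if q.1.1 = q.2.1 then (1 : ℝ) else 2)
      = fun q => 2 - ((R true).indicator (fun _ => (1 : ℝ)) q
        + (R false).indicator (fun _ => (1 : ℝ)) q) := by
    ext ⟨⟨a, x⟩, b, y⟩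
    cases a <;> cases b <;> norm_num [hR, Set.indicator]
  have hi : ∀ i, Integrable ((R i).indicator fun _ => (1 : ℝ)) (mixedStrat.prod mixedStrat) :=
    fun i => (integrable_const 1).indicator (hm i)
  have hv : ∀ i, ∫ q, (R i).indicator (fun _ => (1 : ℝ)) q ∂(mixedStrat.prod mixedStrat) = 1 / 4 :=
    fun i => by
      rw [integral_indicator_const _ (hm i), smul_eq_mul, mul_one]
      exact prod_real_choices i i
  have hadd : Integrable (fun q => (R true).indicator (fun _ => (1 : ℝ)) q
      + (R false).indicator (fun _ => (1 : ℝ)) q) (mixedStrat.prod mixedStrat) :=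
    (hi true).add (hi false)
  rw [hf, integral_sub (integrable_const 2) hadd, integral_add (hi true) (hi false), hv, hv]
  norm_num

lemma optimal_welfare :
    (⨆ alloc : Bool → Bool, ∑ i : Bool, (if ∃ j, alloc j = i then (1 : ℝ) else 0)) = 2 := by
  apply le_antisymm
  · refine ciSup_le fun alloc => ?_
    rw [Fintype.sum_bool]
    split_ifs <;> norm_num
  · refine le_trans ?_ (le_ciSup (Set.finite_range _).bddAbove id)
    norm_num

/-!
Two bidders, two items; each bidder values any nonempty set of items at `1`
and bids on exactly one item (first-price rules).

STATEMENT 19: `mixedStrat` is a symmetric mixed Nash equilibrium: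
* bidding any `c ∈ [0, 1/2]` on either item yields expected utility `1/2`
  (indeed `(1 - c)·(1/2 + (1/2)·c/(1-c)) = 1/2`);
* bidding any `c > 1/2` yields strictly less than `1/2`;
* the equilibrium expected utility of each player is `1/2`.
Moreover each item is allocated (some bidder picked it) with probability
`3/4`, the expected social welfare is `3/2` (two items allocated when the
bidders picked different items, one otherwise), while the optimal welfare
(over allocations of the items to the bidders) is `2`.
-/
theorem simFPA_twoByTwo_inefficient_mixedNash :
    (∀ c : ℝ, 0 ≤ c → c ≤ 1 / 2 → ∀ i : Bool, expUtil c i = 1 / 2) ∧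
    (∀ c : ℝ, 1 / 2 < c → ∀ i : Bool, expUtil c i < 1 / 2) ∧
    (∀ c : ℝ, 0 ≤ c → c ≤ 1 / 2 →
      (1 - c) * (1 / 2 + (1 / 2) * (c / (1 - c))) = 1 / 2) ∧
    (∫ p, expUtil p.2 p.1 ∂mixedStrat) = 1 / 2 ∧
    (∀ i : Bool,
      (mixedStrat.prod mixedStrat) {q : (Bool × ℝ) × Bool × ℝ |
          q.1.1 = i ∨ q.2.1 = i} = ENNReal.ofReal (3 / 4)) ∧
    (∫ q, (if q.1.1 = q.2.1 then (1 : ℝ) else 2)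
        ∂(mixedStrat.prod mixedStrat)) = 3 / 2 ∧
    (⨆ alloc : Bool → Bool,
        ∑ i : Bool, (if ∃ j, alloc j = i then (1 : ℝ) else 0)) = 2 := by
  refine ⟨fun c h0 h1 i => expUtil_of_le h0 h1 i, fun c h i => ?_,
    fun c _ h1 => utility_identity h1, ?_, prod_item_allocated, integral_welfare,
    optimal_welfare⟩
  · rw [expUtil_eq, bidDist_real_Ici_of_gt h]
    linarith
  · have hae : (fun p : Bool × ℝ => expUtil p.2 p.1) =ᵐ[mixedStrat] fun _ => 1 / 2 := by
      filter_upwards [ae_mixedStrat_mem_support] with p hp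
      exact expUtil_of_le hp.1 hp.2 p.1
    rw [integral_congr_ae hae]
    simp
end
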